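/- Let D be a squarefree product of n distinct odd primes p_1,...,p_n, and consider the elliptic curve E: y² = x³ - 2Dx with 2-isogenous curve E': y² = x³ + 8Dx. Then the order of the φ-Selmer group S^(φ)(E') equals twice the order of S^(φ)(E); in particular the Tamagawa ratio T_{2D} = #S^(φ)(E)/#S^(φ)(E') = 1/2. -/

import Mathlib

/-- Solvability of `W² = d + e·Z⁴` over the `p`-adic field `ℚ_p`. -/
def locSolvAt (p : ℕ) (hp : p.Prime) (d e : ℚ) : Prop :=
  haveI : Fact p.Prime := ⟨hp⟩
  ∃ W Z : ℚ_[p], W ^ 2 = (d : ℚ_[p]) + (e : ℚ_[p]) * Z ^ 4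

/-- The value of the square class represented by a sign `ε`, a power of two bit `t`,
and a set `S` of indices of odd primes: `±2^t·∏_{i ∈ S} pᵢ`. -/
def classVal {n : ℕ} (p : Fin n → ℕ) (x : Bool × Bool × Finset (Fin n)) : ℚ :=
  (if x.1 then -1 else 1) * (if x.2.1 then 2 else 1) * ∏ i ∈ x.2.2, (p i : ℚ)

/-- Membership of the square class `x` in the `φ`-Selmer group attached to the torsors
`W² = d + (c/d)Z⁴`: local solvability at `∞`, at `2` and at each odd prime `pᵢ`. -/
def inSelmer {n : ℕ} (p : Fin n → ℕ) (hp : ∀ i, (p i).Prime) (c : ℚ)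
    (x : Bool × Bool × Finset (Fin n)) : Prop :=
  (∃ W Z : ℝ, W ^ 2 = (classVal p x : ℝ) + ((c / classVal p x : ℚ) : ℝ) * Z ^ 4) ∧
  locSolvAt 2 Nat.prime_two (classVal p x) (c / classVal p x) ∧
  ∀ i : Fin n, locSolvAt (p i) (hp i) (classVal p x) (c / classVal p x)

/-!
In `⟨-1, 2, p_1, …, p_n⟩` the torsors `W² = d - (2D/d) Z⁴` are attached to the pairs `d`, `d'` with
`d * d' = -2D`, and `-2D/d` is represented by the complement of `d` in the Boolean algebra
`Bool × Bool × Finset`. At `p i` solvability says that the Hilbert symbol `(d, 2D)` is trivial. At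
`∞` solvability is automatic, because `d` or `-2D/d` is positive, and at `2` it follows from the
other places by the product formula. So the Selmer group of `E'` is the common kernel of `n`
quadratic characters on a group of order `2 ^ (n + 2)`.

Its order is `2 ^ (n + 2) / 2 ^ n` times the number of sets `T` of primes over which the product of
the characters is trivial. By quadratic reciprocity these relations are exactly the `T` for which
`d = ∏ i ∈ T, p i` lies in the Selmer group of `E`, with torsors `W² = d + (8D/d) Z⁴`. That group
consists of positive classes and is stable under multiplication by the class of `2D`, so it has
twice as many elements as odd elements. The orders are therefore in the ratio `4 : 2`.
-/

open scoped NumberTheorySymbols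

section PadicSquares

open Polynomial in
theorem isSquare_padicInt_of_norm_lt {p : ℕ} [Fact p.Prime] {a x : ℤ_[p]}
    (h : ‖x ^ 2 - a‖ < ‖2 * x‖ ^ 2) : IsSquare a := by
  obtain ⟨z, hz, -⟩ := hensels_lemma (p := p) (R := ℤ_[p]) (F := X ^ 2 - C a) (a := x)
    (by simpa [one_add_one_eq_two] using h)
  exact (isSquare_iff_exists_sq a).2 ⟨z, by simpa [sub_eq_zero, eq_comm] using hz⟩

theorem isSquare_padicInt_of_jacobiSym_eq_one {p : ℕ} [hp : Fact p.Prime] (hp2 : p ≠ 2) {a : ℤ}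
    (h : J(a | p) = 1) : IsSquare (a : ℤ_[p]) := by
  obtain ⟨y, hy⟩ := ZMod.isSquare_of_jacobiSym_eq_one h
  obtain ⟨x, rfl⟩ := ZMod.intCast_surjective y
  have hpa : ¬ (p : ℤ) ∣ a := fun hdvd => by
    rw [jacobiSym.mod_left, Int.emod_eq_zero_of_dvd hdvd, jacobiSym.zero_left hp.out.one_lt] at h
    exact zero_ne_one h
  have hxa : (p : ℤ) ∣ x ^ 2 - a := by
    rw [← ZMod.intCast_zmod_eq_zero_iff_dvd]
    push_cast
    rw [hy, sq, sub_self]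
  have h2x : ¬ (p : ℤ) ∣ 2 * x := fun hdvd => by
    rcases (Nat.prime_iff_prime_int.1 hp.out).dvd_or_dvd hdvd with h2 | hx
    · exact hp2 ((Nat.prime_dvd_prime_iff_eq hp.out Nat.prime_two).1 (by exact_mod_cast h2))
    · exact hpa ((dvd_sub_right (dvd_pow hx two_ne_zero)).1 hxa)
  have hnorm : ‖((2 * x : ℤ) : ℤ_[p])‖ = 1 :=
    le_antisymm (PadicInt.norm_le_one _)
      (not_lt.1 fun hlt => h2x ((PadicInt.norm_int_lt_one_iff_dvd _).1 hlt))
  have hlt := (PadicInt.norm_int_lt_one_iff_dvd (p := p) _).2 hxa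
  push_cast at hnorm hlt
  exact isSquare_padicInt_of_norm_lt (x := x) (by rwa [hnorm, one_pow])

theorem isSquare_padicInt_two_of_emod_eight_eq_one {a : ℤ} (h : a % 8 = 1) :
    IsSquare (a : ℤ_[2]) := by
  have hdvd : ((2 : ℕ) : ℤ) ^ 3 ∣ 1 ^ 2 - a := by push_cast; omega
  have hle := PadicInt.norm_int_le_pow_iff_dvd.2 hdvd
  have hnorm : ‖(2 : ℤ_[2])‖ = 2⁻¹ := by simpa using PadicInt.norm_p (p := 2)
  push_cast at hle
  refine isSquare_padicInt_of_norm_lt (x := 1) (hle.trans_lt ?_)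
  rw [mul_one, hnorm]
  norm_num

end PadicSquares

section Quartic

variable {p : ℕ}

theorem locSolvAt_of_isSquare [Fact p.Prime] {hp : p.Prime} {d e r s : ℤ} (hr : r ≠ 0)
    (h : IsSquare ((d * r ^ 4 + e * s ^ 4 : ℤ) : ℤ_[p])) : locSolvAt p hp d e := by
  obtain ⟨w, hw⟩ := (isSquare_iff_exists_sq _).1 (h.map PadicInt.Coe.ringHom)
  have hr' : (r : ℚ_[p]) ≠ 0 := by exact_mod_cast hr
  refine ⟨w / r ^ 2, s / r, ?_⟩
  simp only [map_intCast] at hw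
  push_cast at hw ⊢
  rw [div_pow, ← hw]
  field_simp

theorem exists_int_pow_dvd_of_sq_eq [Fact p.Prime] {d e : ℤ} {W Z : ℚ_[p]} (hZ : ‖Z‖ ≤ 1)
    (hWZ : W ^ 2 = (d : ℚ_[p]) + e * Z ^ 4) (N : ℕ) :
    ∃ w z : ℤ, (p : ℤ) ^ N ∣ w ^ 2 - (d + e * z ^ 4) := by
  obtain ⟨Z, rfl⟩ : ∃ Z' : ℤ_[p], (Z' : ℚ_[p]) = Z := ⟨⟨Z, hZ⟩, rfl⟩
  rw [show (d : ℚ_[p]) + e * (Z : ℚ_[p]) ^ 4 = ((d + e * Z ^ 4 : ℤ_[p]) : ℚ_[p]) by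
    push_cast; rfl] at hWZ
  have hW : ‖W‖ ≤ 1 := by
    rw [← pow_le_one_iff_of_nonneg (norm_nonneg _) two_ne_zero, ← norm_pow, hWZ]
    exact PadicInt.norm_le_one _
  obtain ⟨W, rfl⟩ : ∃ W' : ℤ_[p], (W' : ℚ_[p]) = W := ⟨⟨W, hW⟩, rfl⟩
  replace hWZ : W ^ 2 = d + e * Z ^ 4 :=
    Subtype.coe_injective ((PadicInt.coe_pow W 2).trans hWZ)
  obtain ⟨w, hw⟩ := ZMod.intCast_surjective (PadicInt.toZModPow N W)
  obtain ⟨z, hz⟩ := ZMod.intCast_surjective (PadicInt.toZModPow N Z)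
  refine ⟨w, z, ?_⟩
  have hmod := congrArg (PadicInt.toZModPow N) hWZ
  simp only [map_pow, map_add, map_mul, map_intCast, ← hw, ← hz] at hmod
  rw [← Nat.cast_pow, ← ZMod.intCast_zmod_eq_zero_iff_dvd]
  push_cast
  rw [hmod, sub_self]

/-- The two alternatives are the affine chart of the quartic and the part `Z ∈ p ℤ_p` of the chart
at infinity. -/
theorem locSolvAt.exists_int_pow_dvd {hp : p.Prime} {d e : ℤ} (h : locSolvAt p hp d e) (N : ℕ) :
    ∃ w z : ℤ, (p : ℤ) ^ N ∣ w ^ 2 - (d + e * z ^ 4) ∨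
      (p : ℤ) ^ N ∣ w ^ 2 - (e + d * (p * z) ^ 4) := by
  have : Fact p.Prime := ⟨hp⟩
  obtain ⟨W, Z, hWZ⟩ := h
  push_cast at hWZ
  rcases le_or_gt ‖Z‖ 1 with hZ | hZ
  · obtain ⟨w, z, hw⟩ := exists_int_pow_dvd_of_sq_eq hZ hWZ N
    exact ⟨w, z, Or.inl hw⟩
  · have hZ0 : Z ≠ 0 := norm_pos_iff.1 (one_pos.trans hZ)
    have hZinv : ‖Z⁻¹‖ < 1 := by
      rw [norm_inv]
      exact inv_lt_one_of_one_lt₀ hZ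
    obtain ⟨y, hy⟩ := (PadicInt.norm_lt_one_iff_dvd (⟨Z⁻¹, hZinv.le⟩ : ℤ_[p])).1 hZinv
    replace hy : Z⁻¹ = p * (y : ℚ_[p]) := by exact_mod_cast congrArg ((↑) : ℤ_[p] → ℚ_[p]) hy
    have hinf : (W * Z⁻¹ ^ 2) ^ 2 = (e : ℚ_[p]) + (d * p ^ 4 : ℤ) * (y : ℚ_[p]) ^ 4 := by
      have hdy : ((d * p ^ 4 : ℤ) : ℚ_[p]) * (y : ℚ_[p]) ^ 4 = d * Z⁻¹ ^ 4 := by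
        rw [hy]
        push_cast
        ring
      rw [hdy, mul_pow, hWZ]
      field_simp
      ring
    obtain ⟨w, z, hw⟩ := exists_int_pow_dvd_of_sq_eq (PadicInt.norm_le_one y) hinf N
    exact ⟨w, z, Or.inr (by rwa [mul_pow, ← mul_assoc])⟩

theorem exists_real_sq_eq_add_mul_pow_four_iff {d e : ℝ} :
    (∃ W Z : ℝ, W ^ 2 = d + e * Z ^ 4) ↔ 0 ≤ d ∨ 0 < e := by
  constructor
  · rintro ⟨W, Z, hWZ⟩
    by_contra! ⟨hd, he⟩
    have := mul_nonpos_of_nonpos_of_nonneg he (show 0 ≤ Z ^ 4 by positivity)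
    linarith [sq_nonneg W]
  · suffices 0 ≤ d ∨ 0 < e → ∃ Z : ℝ, 0 ≤ d + e * Z ^ 4 from fun h =>
      (this h).elim fun Z hZ => ⟨√(d + e * Z ^ 4), Z, Real.sq_sqrt hZ⟩
    rintro (hd | he)
    · exact ⟨0, by simpa using hd⟩
    · refine ⟨1 + |d| / e, ?_⟩
      have hZ : |d| / e ≤ (1 + |d| / e) ^ 4 :=
        (le_add_of_nonneg_left zero_le_one).trans
          (le_self_pow₀ (le_add_of_nonneg_right (by positivity)) four_ne_zero)
      rw [div_le_iff₀' he] at hZ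
      linarith [neg_abs_le d]

end Quartic

section OddPrime

variable {p : ℕ}

theorem jacobiSym_eq_one_of_dvd_sq_sub (hp : p.Prime) {a w : ℤ} (ha : ¬ (p : ℤ) ∣ a)
    (h : (p : ℤ) ∣ w ^ 2 - a) : J(a | p) = 1 := by
  have hw : ¬ (p : ℤ) ∣ w := fun hw => ha ((dvd_sub_right (dvd_pow hw two_ne_zero)).1 h)
  have hgcd : w.gcd p = 1 := Int.isCoprime_iff_gcd_eq_one.1
    ((Nat.prime_iff_prime_int.1 hp).coprime_iff_not_dvd.2 hw).symm
  rw [← jacobiSym.sq_one' hgcd]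
  exact jacobiSym.mod_left' (Int.modEq_iff_dvd.2 h)

theorem not_sq_dvd_sq_sub {R : Type*} [CommRing R] {q a w : R} (hq : Prime q) (ha : q ∣ a)
    (ha2 : ¬ q ^ 2 ∣ a) : ¬ q ^ 2 ∣ w ^ 2 - a := fun h => by
  have hw : q ∣ w ^ 2 := (dvd_sub_left ha).1 ((dvd_pow_self _ two_ne_zero).trans h)
  exact ha2 ((dvd_sub_right (pow_dvd_pow_of_dvd (hq.dvd_of_dvd_pow hw) 2)).1 h)

theorem locSolvAt_iff_jacobiSym_left (hp : p.Prime) (hp2 : p ≠ 2) {d e : ℤ}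
    (hd : ¬ (p : ℤ) ∣ d) (he : (p : ℤ) ∣ e) (he2 : ¬ (p : ℤ) ^ 2 ∣ e) :
    locSolvAt p hp d e ↔ J(d | p) = 1 := by
  have : Fact p.Prime := ⟨hp⟩
  refine ⟨fun h => ?_, fun h => locSolvAt_of_isSquare (r := 1) (s := 0) one_ne_zero
    (by simpa using isSquare_padicInt_of_jacobiSym_eq_one hp2 h)⟩
  obtain ⟨w, z, hw | hw⟩ := h.exists_int_pow_dvd 2 <;> rw [← sub_sub] at hw
  · exact jacobiSym_eq_one_of_dvd_sq_sub hp hd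
      ((dvd_sub_left (he.mul_right _)).1 ((dvd_pow_self _ two_ne_zero).trans hw))
  · have hz : (p : ℤ) ^ 2 ∣ d * (p * z) ^ 4 := ⟨d * p ^ 2 * z ^ 4, by ring⟩
    exact absurd ((dvd_sub_left hz).1 hw)
      (not_sq_dvd_sq_sub (Nat.prime_iff_prime_int.1 hp) he he2)

theorem locSolvAt_iff_jacobiSym_right (hp : p.Prime) (hp2 : p ≠ 2) {d e : ℤ}
    (hd : (p : ℤ) ∣ d) (hd2 : ¬ (p : ℤ) ^ 2 ∣ d) (he : ¬ (p : ℤ) ∣ e) :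
    locSolvAt p hp d e ↔ J(e | p) = 1 := by
  have : Fact p.Prime := ⟨hp⟩
  have hpp := Nat.prime_iff_prime_int.1 hp
  constructor
  · intro h
    obtain ⟨w, z, hw | hw⟩ := h.exists_int_pow_dvd 2
    · by_cases hz : (p : ℤ) ∣ z
      · obtain ⟨y, rfl⟩ := hz
        rw [← sub_sub] at hw
        have hy : (p : ℤ) ^ 2 ∣ e * (p * y) ^ 4 := ⟨e * p ^ 2 * y ^ 4, by ring⟩
        exact absurd ((dvd_sub_left hy).1 hw) (not_sq_dvd_sq_sub hpp hd hd2)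
      · rw [add_comm, ← sub_sub] at hw
        have hez : J(e * z ^ 4 | p) = 1 := jacobiSym_eq_one_of_dvd_sq_sub hp
          (fun hdvd => (hpp.dvd_or_dvd hdvd).elim he fun h => hz (hpp.dvd_of_dvd_pow h))
          ((dvd_sub_left hd).1 ((dvd_pow_self _ two_ne_zero).trans hw))
        have hgcd : z.gcd p = 1 :=
          Int.isCoprime_iff_gcd_eq_one.1 (hpp.coprime_iff_not_dvd.2 hz).symm
        rwa [jacobiSym.mul_left, jacobiSym.pow_left, pow_mul _ 2 2, jacobiSym.sq_one hgcd, one_pow,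
          mul_one] at hez
    · rw [← sub_sub] at hw
      exact jacobiSym_eq_one_of_dvd_sq_sub hp he
        ((dvd_sub_left (hd.mul_right _)).1 ((dvd_pow_self _ two_ne_zero).trans hw))
  · intro h
    have hmod : (d * p ^ 4 + e * 1 ^ 4) % (p : ℤ) = e % p := by simp [pow_succ, ← mul_assoc]
    exact locSolvAt_of_isSquare (r := p) (s := 1) (by exact_mod_cast hp.ne_zero)
      (isSquare_padicInt_of_jacobiSym_eq_one hp2 ((jacobiSym.mod_left' hmod).trans h))

theorem locSolvAt_iff_jacobiSym (hp : p.Prime) (hp2 : p ≠ 2) {d e : ℤ}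
    (h : (p : ℤ) ∣ d * e) (h2 : ¬ (p : ℤ) ^ 2 ∣ d * e) :
    locSolvAt p hp d e ↔ J((if (p : ℤ) ∣ d then e else d) | p) = 1 := by
  split_ifs with hd
  · exact locSolvAt_iff_jacobiSym_right hp hp2 hd (fun hdd => h2 (hdd.mul_right e))
      fun he => h2 (sq (p : ℤ) ▸ mul_dvd_mul hd he)
  · exact locSolvAt_iff_jacobiSym_left hp hp2 hd
      (((Nat.prime_iff_prime_int.1 hp).dvd_or_dvd h).resolve_left hd)
      fun he => h2 (he.mul_left d)

end OddPrime

section Two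

theorem sq_emod_eight_or_emod_sixteen_or_emod_thirtyTwo (w : ℤ) :
    w ^ 2 % 8 = 1 ∨ w ^ 2 % 16 = 0 ∨ w ^ 2 % 32 = 4 := by
  rcases Int.even_or_odd w with ⟨k, rfl⟩ | hw
  · rcases Int.even_or_odd k with ⟨l, rfl⟩ | hk
    · exact Or.inr (Or.inl (by ring_nf; omega))
    · have := Int.sq_mod_four_eq_one_of_odd hk
      have := Int.emod_emod_of_dvd (k ^ 2) (by norm_num : (4 : ℤ) ∣ 8)
      have := Int.eight_dvd_sq_sub_one_of_odd hk
      have : (k + k) ^ 2 = 4 * k ^ 2 := by ring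
      omega
  · have := Int.eight_dvd_sq_sub_one_of_odd hw
    omega

theorem locSolvAt_two_of_emod_eight_eq_one {d e : ℤ}
    (h : d % 8 = 1 ∨ (d + e) % 8 = 1 ∨ e % 8 = 1) : locSolvAt 2 Nat.prime_two d e := by
  have hsq := fun {a : ℤ} => isSquare_padicInt_two_of_emod_eight_eq_one (a := a)
  rcases h with h | h | h
  · exact locSolvAt_of_isSquare (r := 1) (s := 0) one_ne_zero (hsq (by omega))
  · exact locSolvAt_of_isSquare (r := 1) (s := 1) one_ne_zero (hsq (by omega))
  · exact locSolvAt_of_isSquare (r := 2) (s := 1) two_ne_zero (hsq (by omega))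

theorem locSolvAt_two_eight_mul_iff {d k : ℤ} (hd : d % 2 = 1) (hk : k % 2 = 1) :
    locSolvAt 2 Nat.prime_two d ((8 * k : ℤ) : ℚ) ↔ d % 8 = 1 := by
  refine ⟨fun h => ?_, fun h => locSolvAt_two_of_emod_eight_eq_one (Or.inl h)⟩
  obtain ⟨w, z, hw | hw⟩ := h.exists_int_pow_dvd 5
  · rw [mul_assoc] at hw
    have := sq_emod_eight_or_emod_sixteen_or_emod_thirtyTwo w
    push_cast at hw
    omega
  · rw [mul_pow, mul_left_comm] at hw
    have := sq_emod_eight_or_emod_sixteen_or_emod_thirtyTwo w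
    push_cast at hw
    omega

theorem locSolvAt_two_two_mul_four_mul_iff {m k : ℤ} (hm : m % 2 = 1) (hk : k % 2 = 1) :
    locSolvAt 2 Nat.prime_two ((2 * m : ℤ) : ℚ) ((4 * k : ℤ) : ℚ) ↔ k % 8 = 1 := by
  constructor
  · intro h
    have hsq := sq_emod_eight_or_emod_sixteen_or_emod_thirtyTwo
    obtain ⟨w, z, hw | hw⟩ := h.exists_int_pow_dvd 5
    · rw [mul_assoc] at hw
      have := hsq w
      push_cast at hw
      omega
    · rw [mul_pow, mul_left_comm, mul_assoc] at hw
      have := hsq w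
      push_cast at hw
      omega
  · intro h
    have hsq : IsSquare (((2 * 2) * (k + 8 * m) : ℤ) : ℤ_[2]) := by
      rw [Int.cast_mul, Int.cast_mul]
      exact (IsSquare.mul_self _).mul (isSquare_padicInt_two_of_emod_eight_eq_one (by omega))
    exact locSolvAt_of_isSquare (r := 2) (s := 1) two_ne_zero (by convert hsq using 2; ring)

end Two

section Characters

variable {ι κ : Type*}

/-- The character of `⟨-1, 2, p_1, …, p_n⟩` taking the values `u`, `v`, `f j` at `-1`, `2`, `p_j`,
evaluated at the square class encoded by `x` (whose representative is squarefree, so that the values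
may lie in any commutative monoid). -/
def classChar {M : Type*} [CommMonoid M] (u v : M) (f : κ → M) (x : Bool × Bool × Finset κ) : M :=
  (if x.1 then u else 1) * (if x.2.1 then v else 1) * ∏ j ∈ x.2.2, f j

theorem map_classChar {M N : Type*} [CommMonoid M] [CommMonoid N] (φ : M →* N) (u v : M)
    (f : κ → M) (x : Bool × Bool × Finset κ) :
    φ (classChar u v f x) = classChar (φ u) (φ v) (fun j => φ (f j)) x := by
  simp only [classChar, map_mul, map_prod, apply_ite φ, map_one]

theorem classChar_congr {M : Type*} [CommMonoid M] {u v : M} {f g : κ → M}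
    {x : Bool × Bool × Finset κ} (h : ∀ j ∈ x.2.2, f j = g j) :
    classChar u v f x = classChar u v g x := by
  rw [classChar, classChar, Finset.prod_congr rfl h]

theorem classChar_sup_of_disjoint {M : Type*} [CommMonoid M] [DecidableEq κ] (u v : M) (f : κ → M)
    {x y : Bool × Bool × Finset κ} (h : Disjoint x y) :
    classChar u v f (x ⊔ y) = classChar u v f x * classChar u v f y := by
  obtain ⟨a, b, s⟩ := x
  obtain ⟨a', b', t⟩ := y
  simp only [Prod.disjoint_iff] at h
  obtain ⟨ha, hb, hst⟩ := h
  have hite : ∀ (c c' : Bool) (m : M), Disjoint c c' →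
      (if c ⊔ c' then m else 1) = (if c then m else 1) * (if c' then m else 1) := by
    rintro (_ | _) (_ | _) m hcc' <;> simp_all
  simp only [classChar, Prod.mk_sup_mk, Finset.sup_eq_union, hite _ _ _ ha, hite _ _ _ hb,
    Finset.prod_union hst]
  ac_rfl

theorem prod_classChar {M : Type*} [CommMonoid M] (T : Finset ι) (u v : ι → M) (f : ι → κ → M)
    (x : Bool × Bool × Finset κ) :
    ∏ i ∈ T, classChar (u i) (v i) (f i) x =
      classChar (∏ i ∈ T, u i) (∏ i ∈ T, v i) (fun j => ∏ i ∈ T, f i j) x := by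
  simp only [classChar, Finset.prod_mul_distrib]
  rw [Finset.prod_comm]
  split_ifs <;> simp

theorem isUnit_classChar {M : Type*} [CommMonoid M] {u v : M} {f : κ → M} (hu : IsUnit u)
    (hv : IsUnit v) (hf : ∀ j, IsUnit (f j)) (x : Bool × Bool × Finset κ) :
    IsUnit (classChar u v f x) := by
  refine (IsUnit.mul ?_ ?_).mul (IsUnit.prod_iff.2 fun j _ => hf j) <;> split_ifs <;> simp_all

theorem sum_finset_prod_eq_ite [Fintype ι] {f : ι → ℤ} (hf : ∀ i, IsUnit (f i))
    [Decidable (∀ i, f i = 1)] :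
    ∑ T : Finset ι, ∏ i ∈ T, f i = if ∀ i, f i = 1 then 2 ^ Fintype.card ι else 0 := by
  rw [← Finset.powerset_univ, ← Finset.prod_one_add]
  split_ifs with h
  · simp [h]
  · push Not at h
    obtain ⟨i, hi⟩ := h
    refine Finset.prod_eq_zero (Finset.mem_univ i) ?_
    rw [(Int.isUnit_iff.1 (hf i)).resolve_left hi, add_neg_cancel]

theorem sum_classChar_eq_ite [Fintype κ] {u v : ℤ} {f : κ → ℤ} (hu : IsUnit u) (hv : IsUnit v)
    (hf : ∀ j, IsUnit (f j)) [Decidable (u = 1 ∧ v = 1 ∧ ∀ j, f j = 1)] :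
    ∑ x, classChar u v f x =
      if u = 1 ∧ v = 1 ∧ ∀ j, f j = 1 then 2 ^ (Fintype.card κ + 2) else 0 := by
  classical
  have hsum : ∑ x, classChar u v f x = (1 + u) * (1 + v) * ∑ s : Finset κ, ∏ j ∈ s, f j := by
    simp only [classChar, Fintype.sum_prod_type, Fintype.sum_bool, if_true, Bool.false_eq_true,
      if_false, ← Finset.mul_sum]
    ring
  rw [hsum, sum_finset_prod_eq_ite hf]
  rcases Int.isUnit_iff.1 hu with rfl | rfl <;> rcases Int.isUnit_iff.1 hv with rfl | rfl <;>
    simp [pow_add, mul_comm]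

/-- Summing `∏ i ∈ T, χ i x` over all pairs `(x, T)` in both orders compares the left and the right
kernel of the pairing; over `𝔽₂` this is the equality of row rank and column rank. -/
theorem card_classChar_eq_one_mul_two_pow [Fintype ι] [Fintype κ] {u v : ι → ℤ} {f : ι → κ → ℤ}
    (hu : ∀ i, IsUnit (u i)) (hv : ∀ i, IsUnit (v i)) (hf : ∀ i j, IsUnit (f i j)) :
    Nat.card {x // ∀ i, classChar (u i) (v i) (f i) x = 1} * 2 ^ Fintype.card ι =
      Nat.card {T : Finset ι //
        ∏ i ∈ T, u i = 1 ∧ ∏ i ∈ T, v i = 1 ∧ ∀ j, ∏ i ∈ T, f i j = 1} *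
        2 ^ (Fintype.card κ + 2) := by
  classical
  have hprod : ∀ (g : ι → ℤ) (T : Finset ι), (∀ i, IsUnit (g i)) → IsUnit (∏ i ∈ T, g i) :=
    fun g T hg => IsUnit.prod_iff.2 fun i _ => hg i
  have hcomm : ∑ x, ∑ T, ∏ i ∈ T, classChar (u i) (v i) (f i) x =
      ∑ T, ∑ x, ∏ i ∈ T, classChar (u i) (v i) (f i) x := Finset.sum_comm
  have hrow := fun x => sum_finset_prod_eq_ite fun i => isUnit_classChar (hu i) (hv i) (hf i) x
  have hcol := fun T => sum_classChar_eq_ite (hprod u T hu) (hprod v T hv)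
    fun j => hprod (f · j) T (hf · j)
  simp only [hrow] at hcomm
  simp only [prod_classChar, hcol, ← Finset.sum_filter, Finset.sum_const, nsmul_eq_mul]
    at hcomm
  simp only [Nat.card_eq_fintype_card, Fintype.card_subtype]
  exact_mod_cast hcomm

end Characters

section Jacobi

/-- The Jacobi symbol `J(· | b)` as a monoid homomorphism. -/
def jacobiHom (b : ℕ) : ℤ →* ℤ where
  toFun a := J(a | b)
  map_one' := jacobiSym.one_left b
  map_mul' a c := jacobiSym.mul_left a c b

theorem jacobiSym_prod_right {ι : Type*} {f : ι → ℕ} {s : Finset ι} (hf : ∀ i ∈ s, f i ≠ 0)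
    (a : ℤ) : J(a | ∏ i ∈ s, f i) = ∏ i ∈ s, J(a | f i) := by
  classical
  induction s using Finset.induction_on with
  | empty => simp
  | insert i s hi ih =>
    rw [Finset.forall_mem_insert] at hf
    rw [Finset.prod_insert hi, Finset.prod_insert hi,
      jacobiSym.mul_right' _ hf.1 (Finset.prod_ne_zero_iff.2 hf.2), ih hf.2]

theorem isUnit_jacobiSym_of_not_dvd {q : ℕ} (hq : q.Prime) {a : ℤ} (ha : ¬ (q : ℤ) ∣ a) :
    IsUnit J(a | q) :=
  Int.isUnit_iff.2 <| jacobiSym.eq_one_or_neg_one <| Int.isCoprime_iff_gcd_eq_one.1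
    ((Nat.prime_iff_prime_int.1 hq).coprime_iff_not_dvd.2 ha).symm

theorem jacobiSym_neg_one_eq_ite {b : ℕ} (hb : b % 2 = 1) :
    J(-1 | b) = if b % 4 = 1 then 1 else -1 := by
  rw [jacobiSym.at_neg_one (Nat.odd_iff.2 hb), ZMod.χ₄_nat_eq_if_mod_four]
  split_ifs <;> omega

theorem jacobiSym_two_eq_ite {b : ℕ} (hb : b % 2 = 1) :
    J(2 | b) = if b % 8 = 1 ∨ b % 8 = 7 then 1 else -1 := by
  rw [jacobiSym.at_two (Nat.odd_iff.2 hb), ZMod.χ₈_nat_eq_if_mod_eight]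
  split_ifs <;> omega

theorem jacobiSym_neg_one_and_two_eq_one_iff {b : ℕ} (hb : b % 2 = 1) :
    J(-1 | b) = 1 ∧ J(2 | b) = 1 ↔ b % 8 = 1 := by
  rw [jacobiSym_neg_one_eq_ite hb, jacobiSym_two_eq_ite hb]
  split_ifs <;> norm_num <;> omega

theorem jacobiSym_eq_jacobiSym_neg_of_mul_emod_four {a b : ℕ} (h : a * b % 4 = 1) :
    J(a | b) = J(-b | a) := by
  obtain ⟨ha, hb⟩ := Nat.odd_mul.1 (Nat.odd_iff.2 (by omega : a * b % 2 = 1))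
  rw [← neg_one_mul, jacobiSym.mul_left, jacobiSym_neg_one_eq_ite (Nat.odd_iff.1 ha),
    ← jacobiSym.quadratic_reciprocity_if (Nat.odd_iff.1 ha) (Nat.odd_iff.1 hb)]
  rw [Nat.mul_mod] at h
  rcases Nat.odd_mod_four_iff.1 (Nat.odd_iff.1 ha) with ha4 | ha4 <;>
    rcases Nat.odd_mod_four_iff.1 (Nat.odd_iff.1 hb) with hb4 | hb4 <;> simp_all

/-- The product formula for the Hilbert symbol of `σ m` and `2 m k`, read at the prime `2`. -/
theorem emod_eight_eq_one_of_jacobiSym_mul {m k : ℕ} (hm : m % 2 = 1) (hk : k % 2 = 1)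
    (hmk : m.Coprime k) {σ : ℤ} (hσ : IsUnit σ) (h : J(σ * m | k) * J(-σ * 2 * k | m) = 1) :
    σ * m % 8 = 1 ∨ (σ * m + -σ * 2 * k) % 8 = 1 := by
  have hrec := jacobiSym.quadratic_reciprocity_if hm hk
  have hkm := jacobiSym.eq_one_or_neg_one (a := k) (b := m) (by simpa using hmk.symm)
  simp only [jacobiSym.mul_left, ← hrec, jacobiSym_two_eq_ite hm] at h
  rcases Int.isUnit_iff.1 hσ with rfl | rfl <;> rcases hkm with hkm | hkm <;>
    simp only [neg_neg, jacobiSym.one_left, hkm, jacobiSym_neg_one_eq_ite hm,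
      jacobiSym_neg_one_eq_ite hk] at h <;>
    split_ifs at h <;> omega

end Jacobi

section PrimeFamily

variable {ι : Type*} {p : ι → ℕ}

/-- The squarefree number `∏ i ∈ s, p i` attached to a set of indices; `D` is the case
`s = Finset.univ`. -/
def primeProd (p : ι → ℕ) (s : Finset ι) : ℕ := ∏ i ∈ s, p i

/-- The squarefree integer representing the square class `x`, that is `classVal` before the cast to
`ℚ`, for an arbitrary index type. -/
def classInt (p : ι → ℕ) (x : Bool × Bool × Finset ι) : ℤ :=
  classChar (-1) 2 (fun i => (p i : ℤ)) x

theorem classInt_eq_mul_primeProd (x : Bool × Bool × Finset ι) :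
    classInt p x = (if x.1 then -1 else 1) * (if x.2.1 then 2 else 1) * primeProd p x.2.2 := by
  rw [classInt, classChar, primeProd, Nat.cast_prod]

theorem classVal_eq_classInt {n : ℕ} (p : Fin n → ℕ) (x : Bool × Bool × Finset (Fin n)) :
    classVal p x = classInt p x := by
  simp [classInt_eq_mul_primeProd, classVal, primeProd]

theorem classInt_mul_classInt_compl [Fintype ι] [DecidableEq ι] (x : Bool × Bool × Finset ι) :
    classInt p x * classInt p xᶜ = -2 * primeProd p Finset.univ := by
  rw [classInt, classInt, ← classChar_sup_of_disjoint _ _ _ disjoint_compl_right, sup_compl_eq_top]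
  simp [classChar, primeProd]

theorem primeProd_emod_two (hodd : ∀ i, p i % 2 = 1) (s : Finset ι) : primeProd p s % 2 = 1 :=
  Nat.odd_iff.1 (Finset.prod_induction _ Odd (fun _ _ => Odd.mul) odd_one
    fun i _ => Nat.odd_iff.2 (hodd i))

theorem primeProd_pos (hp : ∀ i, (p i).Prime) (s : Finset ι) : 0 < primeProd p s :=
  Finset.prod_pos fun i _ => (hp i).pos

theorem prime_dvd_primeProd_iff (hp : ∀ i, (p i).Prime) (hinj : Function.Injective p)
    {s : Finset ι} {i : ι} : p i ∣ primeProd p s ↔ i ∈ s := by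
  rw [primeProd, Prime.dvd_finsetProd_iff (hp i).prime]
  constructor
  · rintro ⟨j, hj, hij⟩
    rwa [hinj ((Nat.prime_dvd_prime_iff_eq (hp i) (hp j)).1 hij)]
  · exact fun hi => ⟨i, hi, dvd_rfl⟩

theorem squarefree_primeProd (hp : ∀ i, (p i).Prime) (hinj : Function.Injective p)
    (s : Finset ι) : Squarefree (primeProd p s) :=
  Finset.squarefree_prod_of_pairwise_isCoprime
    (fun i _ j _ hij => Nat.coprime_iff_isRelPrime.1
      ((Nat.coprime_primes (hp i) (hp j)).2 (hinj.ne hij)))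
    fun i _ => (hp i).squarefree

theorem coprime_primeProd_of_disjoint (hp : ∀ i, (p i).Prime) (hinj : Function.Injective p)
    {s t : Finset ι} (hst : Disjoint s t) : (primeProd p s).Coprime (primeProd p t) :=
  Nat.Coprime.prod_left fun i hi => ((hp i).coprime_iff_not_dvd).2 fun h =>
    Finset.disjoint_left.1 hst hi ((prime_dvd_primeProd_iff hp hinj).1 h)

theorem not_prime_dvd_of_dvd_two_pow {q k : ℕ} (hq : q.Prime) (hodd : q % 2 = 1) {u : ℤ}
    (hu : u ∣ 2 ^ k) : ¬ (q : ℤ) ∣ u := fun h => by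
  have hq2 := (hq.dvd_of_dvd_pow (by exact_mod_cast h.trans hu : q ∣ 2 ^ k))
  rw [Nat.prime_dvd_prime_iff_eq hq Nat.prime_two] at hq2
  omega

theorem prime_dvd_classInt_iff (hp : ∀ i, (p i).Prime) (hodd : ∀ i, p i % 2 = 1)
    (hinj : Function.Injective p) {x : Bool × Bool × Finset ι} {i : ι} :
    (p i : ℤ) ∣ classInt p x ↔ i ∈ x.2.2 := by
  have hu : ¬ (p i : ℤ) ∣ (if x.1 then -1 else 1) * (if x.2.1 then 2 else 1) :=
    not_prime_dvd_of_dvd_two_pow (k := 1) (hp i) (hodd i) (by split_ifs <;> norm_num)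
  rw [classInt_eq_mul_primeProd, (Nat.prime_iff_prime_int.1 (hp i)).dvd_mul, or_iff_right hu,
    Int.natCast_dvd_natCast, prime_dvd_primeProd_iff hp hinj]

theorem classInt_nonneg_iff (hp : ∀ i, (p i).Prime) (x : Bool × Bool × Finset ι) :
    0 ≤ classInt p x ↔ x.1 = false := by
  obtain ⟨_ | _, _ | _, s⟩ := x <;>
    simp [classInt_eq_mul_primeProd, primeProd_pos hp, (primeProd_pos hp s).ne']

theorem not_sq_dvd_mul_of_squarefree {q m : ℕ} (hq : q.Prime) (hm : Squarefree m) {u : ℤ}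
    (hu : ¬ (q : ℤ) ∣ u) : ¬ (q : ℤ) ^ 2 ∣ u * m := fun h => by
  have hcop := ((Nat.prime_iff_prime_int.1 hq).coprime_iff_not_dvd.2 hu).pow_left (m := 2)
  have hqm : q * q ∣ m := by
    rw [← sq]
    exact_mod_cast hcop.dvd_of_dvd_mul_left h
  exact hq.not_isUnit (hm q hqm)

theorem jacobiSym_primeProd_right (hp : ∀ i, (p i).Prime) (s : Finset ι) (a : ℤ) :
    J(a | primeProd p s) = ∏ i ∈ s, J(a | p i) :=
  jacobiSym_prod_right (fun i _ => (hp i).ne_zero) a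

theorem jacobiSym_classInt (x : Bool × Bool × Finset ι) (b : ℕ) :
    J(classInt p x | b) = classChar J(-1 | b) J(2 | b) (fun j => J(p j | b)) x :=
  map_classChar (jacobiHom b) (-1) 2 _ x

end PrimeFamily

section LocalSymbols

variable {ι : Type*} [Fintype ι] [DecidableEq ι] {p : ι → ℕ}

/-- The entry `i, j` is the Hilbert symbol `(p j, 2D)` at `p i`; for `i = j` it is computed with
`-2D / p i`, the value of the complementary square class, in place of `p i`. -/
def symbolMatrix (p : ι → ℕ) (i j : ι) : ℤ :=
  if i = j then J(classInt p (false, false, {i})ᶜ | p i) else J(p j | p i)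

/-- The Hilbert symbol `(d, 2D)` at `p i` of the square class `d` encoded by `x`. -/
def localSymbol (p : ι → ℕ) (i : ι) (x : Bool × Bool × Finset ι) : ℤ :=
  classChar J(-1 | p i) J(2 | p i) (symbolMatrix p i) x

theorem isUnit_symbolMatrix (hp : ∀ i, (p i).Prime) (hodd : ∀ i, p i % 2 = 1)
    (hinj : Function.Injective p) (i j : ι) : IsUnit (symbolMatrix p i j) := by
  unfold symbolMatrix
  split_ifs with h
  · exact isUnit_jacobiSym_of_not_dvd (hp i) (by simp [prime_dvd_classInt_iff hp hodd hinj])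
  · refine isUnit_jacobiSym_of_not_dvd (hp i) fun hdvd => h ?_
    exact hinj ((Nat.prime_dvd_prime_iff_eq (hp i) (hp j)).1 (by exact_mod_cast hdvd))

theorem localSymbol_of_notMem {i : ι} {x : Bool × Bool × Finset ι} (hi : i ∉ x.2.2) :
    localSymbol p i x = J(classInt p x | p i) := by
  rw [jacobiSym_classInt, localSymbol]
  exact classChar_congr fun j hj => if_neg (by rintro rfl; exact hi hj)

/-- For `i ∈ x.2.2` split off `p i`: the symbol of the cofactor `x'` occurs twice, once directly and
once in the complement of `p i`, and cancels. -/
theorem localSymbol_eq_jacobiSym (hp : ∀ i, (p i).Prime) (hodd : ∀ i, p i % 2 = 1)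
    (hinj : Function.Injective p) (i : ι) (x : Bool × Bool × Finset ι) :
    localSymbol p i x = J((if i ∈ x.2.2 then classInt p xᶜ else classInt p x) | p i) := by
  split_ifs with hi
  swap
  · exact localSymbol_of_notMem hi
  obtain ⟨a, b, s⟩ := x
  let g : Bool × Bool × Finset ι := (false, false, {i})
  let x' : Bool × Bool × Finset ι := (a, b, s.erase i)
  have hx'i : i ∉ x'.2.2 := Finset.notMem_erase i s
  have hx'g : Disjoint x' g := Prod.disjoint_iff.2
    ⟨disjoint_bot_right, Prod.disjoint_iff.2 ⟨disjoint_bot_right, by simp [x', g]⟩⟩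
  have hx : x' ⊔ g = (a, b, s) := by simp [x', g, Finset.insert_erase hi]
  have hxx' : Disjoint (x' ⊔ g)ᶜ x' := disjoint_compl_left.mono_right le_sup_left
  have hg : gᶜ = (x' ⊔ g)ᶜ ⊔ x' := by
    rw [compl_sup, sup_comm, sup_inf_left, sup_compl_eq_top, top_inf_eq,
      sup_eq_right.2 hx'g.le_compl_right]
  have hgi : localSymbol p i g = J(classInt p (x' ⊔ g)ᶜ | p i) * J(classInt p x' | p i) := by
    rw [← jacobiSym.mul_left, classInt, classInt, ← classChar_sup_of_disjoint _ _ _ hxx', ← hg]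
    simp [localSymbol, classChar, symbolMatrix, g, classInt]
  have hunit : IsUnit J(classInt p x' | p i) := isUnit_jacobiSym_of_not_dvd (hp i)
    (by rwa [prime_dvd_classInt_iff hp hodd hinj])
  rw [← hx, localSymbol, classChar_sup_of_disjoint _ _ _ hx'g, ← localSymbol, ← localSymbol, hgi,
    localSymbol_of_notMem hx'i, mul_left_comm, Int.isUnit_mul_self hunit, mul_one]

theorem classInt_emod_eight_of_jacobiSym (hp : ∀ i, (p i).Prime) (hodd : ∀ i, p i % 2 = 1)
    (hinj : Function.Injective p) {x : Bool × Bool × Finset ι}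
    (h : ∀ i, J((if i ∈ x.2.2 then classInt p xᶜ else classInt p x) | p i) = 1) :
    classInt p x % 8 = 1 ∨ (classInt p x + classInt p xᶜ) % 8 = 1 ∨ classInt p xᶜ % 8 = 1 := by
  wlog hb : x.2.1 = false generalizing x
  · have hcompl := this (x := xᶜ) (by simpa [ite_not] using h) (by simpa using hb)
    rw [compl_compl, add_comm] at hcompl
    tauto
  obtain ⟨a, b, s⟩ := x
  obtain rfl : b = false := hb
  have hd : J(classInt p (a, false, s) | primeProd p sᶜ) = 1 := by
    rw [jacobiSym_primeProd_right hp]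
    exact Finset.prod_eq_one fun i hi => by simpa [Finset.mem_compl.1 hi] using h i
  have he : J(classInt p (a, false, s)ᶜ | primeProd p s) = 1 := by
    rw [jacobiSym_primeProd_right hp]
    exact Finset.prod_eq_one fun i hi => by simpa [hi] using h i
  have hdσ : classInt p (a, false, s) = (if a then -1 else 1) * primeProd p s := by
    simp [classInt_eq_mul_primeProd]
  have heσ : classInt p (a, false, s)ᶜ = -(if a then -1 else 1) * 2 * primeProd p sᶜ := by
    cases a <;> simp [classInt_eq_mul_primeProd]
  rw [hdσ] at hd ⊢
  rw [heσ] at he ⊢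
  rw [← or_assoc]
  exact Or.inl <| emod_eight_eq_one_of_jacobiSym_mul (primeProd_emod_two hodd s)
    (primeProd_emod_two hodd sᶜ) (coprime_primeProd_of_disjoint hp hinj disjoint_compl_right)
    (by cases a <;> simp) (by rw [hd, he, mul_one])

end LocalSymbols

section PosOddSelmer

variable {ι : Type*} [Fintype ι] [DecidableEq ι] {p : ι → ℕ}

/-- The Selmer conditions on `W² = d + (8D/d) Z⁴` for the odd positive square class
`d = ∏ i ∈ T, p i`. -/
def IsPosOddSelmer (p : ι → ℕ) (T : Finset ι) : Prop :=
  primeProd p T % 8 = 1 ∧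
    ∀ i, J((if i ∈ T then 2 * primeProd p Tᶜ else primeProd p T : ℤ) | p i) = 1

theorem isPosOddSelmer_empty (p : ι → ℕ) : IsPosOddSelmer p ∅ := by
  simp [IsPosOddSelmer, primeProd]

theorem prod_symbolMatrix_of_notMem (hp : ∀ i, (p i).Prime) {T : Finset ι} {j : ι}
    (hj : j ∉ T) : ∏ i ∈ T, symbolMatrix p i j = J(p j | primeProd p T) := by
  rw [jacobiSym_primeProd_right hp]
  exact Finset.prod_congr rfl fun i hi => if_neg (by rintro rfl; exact hj hi)

theorem prod_symbolMatrix_of_mem (hp : ∀ i, (p i).Prime) (hinj : Function.Injective p)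
    {T : Finset ι} (hT : primeProd p T % 4 = 1) {j : ι} (hj : j ∈ T) :
    ∏ i ∈ T, symbolMatrix p i j = J(2 * primeProd p Tᶜ | p j) := by
  have hj' : j ∉ T.erase j := Finset.notMem_erase j T
  have hmul : p j * primeProd p (T.erase j) = primeProd p T := Finset.mul_prod_erase T p hj
  have hcompl : primeProd p {j}ᶜ = primeProd p (T.erase j) * primeProd p Tᶜ := by
    have hdisj : Disjoint (T.erase j) Tᶜ :=
      disjoint_compl_right.mono_left (Finset.erase_subset j T)
    rw [primeProd, primeProd, primeProd, ← Finset.prod_union hdisj]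
    congr 1
    ext i
    rcases eq_or_ne i j with rfl | hij <;> simp [*, em]
  have hdiag : symbolMatrix p j j =
      J(-primeProd p (T.erase j) | p j) * J(2 * primeProd p Tᶜ | p j) := by
    have hval : classInt p (false, false, {j})ᶜ = -2 * primeProd p {j}ᶜ := by
      simp [classInt_eq_mul_primeProd]
    rw [← jacobiSym.mul_left, symbolMatrix, if_pos rfl, hval, hcompl, Nat.cast_mul]
    ring_nf
  have hunit : IsUnit J(-primeProd p (T.erase j) | p j) := isUnit_jacobiSym_of_not_dvd (hp j)
    (by rwa [dvd_neg, Int.natCast_dvd_natCast, prime_dvd_primeProd_iff hp hinj])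
  rw [← Finset.mul_prod_erase T _ hj, prod_symbolMatrix_of_notMem hp hj',
    jacobiSym_eq_jacobiSym_neg_of_mul_emod_four (by rw [hmul, hT]), hdiag, mul_right_comm,
    Int.isUnit_mul_self hunit, one_mul]

theorem isPosOddSelmer_iff (hp : ∀ i, (p i).Prime) (hodd : ∀ i, p i % 2 = 1)
    (hinj : Function.Injective p) (T : Finset ι) :
    IsPosOddSelmer p T ↔ ∏ i ∈ T, J(-1 | p i) = 1 ∧ ∏ i ∈ T, J(2 | p i) = 1 ∧
      ∀ j, ∏ i ∈ T, symbolMatrix p i j = 1 := by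
  rw [IsPosOddSelmer, ← jacobiSym_primeProd_right hp, ← jacobiSym_primeProd_right hp, ← and_assoc,
    jacobiSym_neg_one_and_two_eq_one_iff (primeProd_emod_two hodd T)]
  refine and_congr_right fun hT => forall_congr' fun j => ?_
  have hT4 : primeProd p T % 4 = 1 := by omega
  split_ifs with hj
  · rw [prod_symbolMatrix_of_mem hp hinj hT4 hj]
  · rw [prod_symbolMatrix_of_notMem hp hj,
      jacobiSym.quadratic_reciprocity_one_mod_four' (Nat.odd_iff.2 (hodd j)) hT4]

end PosOddSelmer

section Selmer

variable {n : ℕ} {p : Fin n → ℕ}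

theorem inSelmer_iff (hp : ∀ i, (p i).Prime) (hodd : ∀ i, p i % 2 = 1)
    (hinj : Function.Injective p) {u e : ℤ} {k : ℕ} (hu : u ∣ 2 ^ k)
    {x : Bool × Bool × Finset (Fin n)} (he : classInt p x * e = u * primeProd p Finset.univ) :
    inSelmer p hp (u * primeProd p Finset.univ) x ↔
      (x.1 = false ∨ 0 < e) ∧ locSolvAt 2 Nat.prime_two (classInt p x) e ∧
        ∀ i, J((if i ∈ x.2.2 then e else classInt p x) | p i) = 1 := by
  have hne : (classInt p x : ℚ) ≠ 0 := by
    have := (primeProd_pos hp x.2.2).ne'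
    rw [Int.cast_ne_zero, classInt_eq_mul_primeProd]
    split_ifs <;> simpa
  have hdiv : (u * primeProd p Finset.univ : ℚ) / classInt p x = e :=
    (div_eq_iff hne).2 (by rw [mul_comm (e : ℚ)]; exact_mod_cast he.symm)
  rw [inSelmer, classVal_eq_classInt, hdiv]
  refine and_congr ?_ (and_congr_right fun _ => forall_congr' fun i => ?_)
  · rw [Rat.cast_intCast, Rat.cast_intCast, exists_real_sq_eq_add_mul_pow_four_iff,
      Int.cast_nonneg_iff, Int.cast_pos, classInt_nonneg_iff hp]
  · have hui := not_prime_dvd_of_dvd_two_pow (hp i) (hodd i) hu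
    have hdvd : (p i : ℤ) ∣ primeProd p Finset.univ :=
      Int.natCast_dvd_natCast.2 ((prime_dvd_primeProd_iff hp hinj).2 (Finset.mem_univ i))
    rw [locSolvAt_iff_jacobiSym (hp i) (by have := hodd i; omega) (he ▸ hdvd.mul_left u)
      (he ▸ not_sq_dvd_mul_of_squarefree (hp i) (squarefree_primeProd hp hinj _) hui)]
    simp only [prime_dvd_classInt_iff hp hodd hinj]

theorem inSelmer_neg_two_iff (hp : ∀ i, (p i).Prime) (hodd : ∀ i, p i % 2 = 1)
    (hinj : Function.Injective p) (x : Bool × Bool × Finset (Fin n)) :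
    inSelmer p hp (-2 * primeProd p Finset.univ) x ↔ ∀ i, localSymbol p i x = 1 := by
  have hiff := inSelmer_iff hp hodd hinj (k := 1) (by norm_num) (classInt_mul_classInt_compl x)
  push_cast at hiff
  simp only [hiff, localSymbol_eq_jacobiSym hp hodd hinj]
  refine ⟨fun h => h.2.2, fun h => ⟨?_, locSolvAt_two_of_emod_eight_eq_one
    (classInt_emod_eight_of_jacobiSym hp hodd hinj h), h⟩⟩
  refine or_iff_not_imp_left.2 fun ha => lt_of_le_of_ne ?_ ?_
  · exact (classInt_nonneg_iff hp xᶜ).2 (by simpa using ha)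
  · intro h0
    have hpos := primeProd_pos hp (Finset.univ : Finset (Fin n))
    have hmul := classInt_mul_classInt_compl (p := p) x
    rw [← h0, mul_zero] at hmul
    omega

theorem inSelmer_eight_iff_classInt (hp : ∀ i, (p i).Prime) (hodd : ∀ i, p i % 2 = 1)
    (hinj : Function.Injective p) (x : Bool × Bool × Finset (Fin n)) :
    inSelmer p hp (8 * primeProd p Finset.univ) x ↔
      x.1 = false ∧ locSolvAt 2 Nat.prime_two (classInt p x) ((-4 * classInt p xᶜ : ℤ) : ℚ) ∧
        ∀ i, J((if i ∈ x.2.2 then -classInt p xᶜ else classInt p x) | p i) = 1 := by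
  have he : classInt p x * (-4 * classInt p xᶜ) = 8 * primeProd p Finset.univ := by
    rw [mul_left_comm, classInt_mul_classInt_compl]
    ring
  have hreal : x.1 = false ∨ 0 < -4 * classInt p xᶜ ↔ x.1 = false := by
    refine or_iff_left_of_imp fun hpos => ?_
    have hneg : ¬ 0 ≤ classInt p xᶜ := by omega
    simpa [classInt_nonneg_iff hp] using hneg
  have hiff := inSelmer_iff hp hodd hinj (k := 3) (by norm_num) he
  rw [Int.cast_ofNat, hreal] at hiff
  refine hiff.trans (and_congr_right fun _ => and_congr_right fun _ => forall_congr' fun i => ?_)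
  split_ifs
  · rw [neg_mul_comm, jacobiSym.mul_left, jacobiSym.at_four (Nat.odd_iff.2 (hodd i)), one_mul]
  · rfl

theorem inSelmer_eight_iff (hp : ∀ i, (p i).Prime) (hodd : ∀ i, p i % 2 = 1)
    (hinj : Function.Injective p) (x : Bool × Bool × Finset (Fin n)) :
    inSelmer p hp (8 * primeProd p Finset.univ) x ↔
      x.1 = false ∧ IsPosOddSelmer p (if x.2.1 then x.2.2ᶜ else x.2.2) := by
  rw [inSelmer_eight_iff_classInt hp hodd hinj]
  obtain ⟨a, b, s⟩ := x
  refine and_congr_right fun ha => ?_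
  obtain rfl : a = false := ha
  have hs : (primeProd p s : ℤ) % 2 = 1 := by exact_mod_cast primeProd_emod_two hodd s
  have hsc : (primeProd p sᶜ : ℤ) % 2 = 1 := by exact_mod_cast primeProd_emod_two hodd sᶜ
  cases b
  · change _ ↔ IsPosOddSelmer p s
    have hd : classInt p (false, false, s) = primeProd p s := by simp [classInt_eq_mul_primeProd]
    have he : classInt p (false, false, s)ᶜ = -(2 * primeProd p sᶜ) := by
      simp [classInt_eq_mul_primeProd]
    have h8 : -4 * -(2 * primeProd p sᶜ : ℤ) = 8 * primeProd p sᶜ := by ring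
    rw [hd, he, h8, locSolvAt_two_eight_mul_iff hs hsc, neg_neg]
    exact and_congr (by omega) Iff.rfl
  · change _ ↔ IsPosOddSelmer p sᶜ
    have hd : classInt p (false, true, s) = 2 * primeProd p s := by
      simp [classInt_eq_mul_primeProd]
    have he : classInt p (false, true, s)ᶜ = -primeProd p sᶜ := by
      simp [classInt_eq_mul_primeProd]
    rw [hd, he, neg_mul_neg, locSolvAt_two_two_mul_four_mul_iff hs hsc, neg_neg]
    exact and_congr (by omega) (by simp [ite_not])

theorem card_inSelmer_neg_two (hp : ∀ i, (p i).Prime) (hodd : ∀ i, p i % 2 = 1)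
    (hinj : Function.Injective p) :
    Nat.card {x // inSelmer p hp (-2 * primeProd p Finset.univ) x} =
      4 * Nat.card {T // IsPosOddSelmer p T} := by
  have hunit {a : ℤ} (ha : a ∣ 2 ^ 1) (i : Fin n) : IsUnit J(a | p i) :=
    isUnit_jacobiSym_of_not_dvd (hp i) (not_prime_dvd_of_dvd_two_pow (hp i) (hodd i) ha)
  have hcard := card_classChar_eq_one_mul_two_pow (hunit (a := -1) (by norm_num))
    (hunit (a := 2) (by norm_num)) (isUnit_symbolMatrix hp hodd hinj)
  simp only [← isPosOddSelmer_iff hp hodd hinj] at hcard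
  simp only [inSelmer_neg_two_iff hp hodd hinj, localSymbol]
  exact Nat.eq_of_mul_eq_mul_right (Nat.two_pow_pos _) (hcard.trans (by ring))

/-- Multiplication by the class of `2D` exchanges the even and the odd positive classes. -/
theorem card_inSelmer_eight (hp : ∀ i, (p i).Prime) (hodd : ∀ i, p i % 2 = 1)
    (hinj : Function.Injective p) :
    Nat.card {x // inSelmer p hp (8 * primeProd p Finset.univ) x} =
      2 * Nat.card {T // IsPosOddSelmer p T} := by
  have hmem := inSelmer_eight_iff hp hodd hinj
  let e : Bool × {T // IsPosOddSelmer p T} ≃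
      {x // inSelmer p hp (8 * primeProd p Finset.univ) x} :=
    { toFun := fun y => ⟨(false, y.1, if y.1 then y.2.1ᶜ else y.2.1), (hmem _).2 ⟨rfl, by
        obtain ⟨_ | _, T, hT⟩ := y <;> simpa using hT⟩⟩
      invFun := fun x => (x.1.2.1, ⟨_, ((hmem x.1).1 x.2).2⟩)
      left_inv := by rintro ⟨_ | _, T, hT⟩ <;> simp
      right_inv := by
        rintro ⟨⟨a, b, s⟩, hx⟩
        obtain rfl : a = false := ((hmem _).1 hx).1
        cases b <;> simp }
  rw [← Nat.card_congr e, Nat.card_prod, Nat.card_eq_fintype_card (α := Bool), Fintype.card_bool]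

end Selmer

/-- For `D` a squarefree product of `n` distinct odd primes, `E : y² = x³ - 2Dx` and
`E' : y² = x³ + 8Dx` its `2`-isogenous curve, the `φ`-Selmer group of `E'` (torsors
`W² = d - (2D/d)Z⁴`) has order twice that of the `φ`-Selmer group of `E` (torsors
`W² = d + (8D/d)Z⁴`); in particular the Tamagawa ratio `T_{2D} = 1/2`. -/
theorem stmt_16 (n : ℕ) (p : Fin n → ℕ) (hp : ∀ i, (p i).Prime)
    (hodd : ∀ i, p i % 2 = 1) (hinj : Function.Injective p)
    (D : ℚ) (hD : D = ∏ i, (p i : ℚ)) :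
    Nat.card {x : Bool × Bool × Finset (Fin n) // inSelmer p hp (-2 * D) x} =
      2 * Nat.card {x : Bool × Bool × Finset (Fin n) // inSelmer p hp (8 * D) x} ∧
    (Nat.card {x : Bool × Bool × Finset (Fin n) // inSelmer p hp (8 * D) x} : ℚ) /
      (Nat.card {x : Bool × Bool × Finset (Fin n) // inSelmer p hp (-2 * D) x} : ℚ)
      = 1 / 2 := by
  obtain rfl : D = primeProd p Finset.univ := hD.trans (Nat.cast_prod p Finset.univ).symm
  have : Nonempty {T // IsPosOddSelmer p T} := ⟨⟨∅, isPosOddSelmer_empty p⟩⟩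
  have hne : (Nat.card {T // IsPosOddSelmer p T} : ℚ) ≠ 0 := Nat.cast_ne_zero.2 Nat.card_pos.ne'
  rw [card_inSelmer_neg_two hp hodd hinj, card_inSelmer_eight hp hodd hinj]
  refine ⟨by ring, ?_⟩
  push_cast
  field_simp
  norm_num
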